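/- For n ∈ ℤ, Q ∈ ℝ⁶ with |Q| > 0, and z ∈ ℂ with Im z > 0, with the integral interpreted as an improper Riemann integral: lim_{ε→0⁺} ∫₀^∞ e^{itz} exp((i|Q|² - ε)/(4t)) / (4πit)³ · t^{-n} dt = (i z^{1+n/2} / (2^{3-n} π³ |Q|^{n+2})) K_{n+2}(|Q|√(-z)), where K_ν is the modified Bessel function of the second kind and √(-z) is the principal branch. -/

import Mathlib

open MeasureTheory Filter

/-- The Macdonald function (modified Bessel function of the second kind),
`K_ν(w) = ∫₀^∞ e^{-w cosh u} cosh(ν u) du` (valid for `Re w > 0`). -/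
noncomputable def besselK (ν : ℂ) (w : ℂ) : ℂ :=
  ∫ u in Set.Ioi (0 : ℝ), Complex.exp (-w * Real.cosh u) * Complex.cosh (ν * u)

/-!
In the variable `u = log t`, `∫₀^∞ t^{ν-1} e^{-a/t - bt} dt` becomes
`I(ν, a, b) = ∫_ℝ e^{νu - a e^{-u} - b e^u} du`. Translating `u` by a real number shows that the
function `ζ ↦ e^{νζ} I(ν, a e^{-ζ}, b e^ζ)` is invariant under real translations. It is also
holomorphic on the horizontal strip where `a e^{-ζ}` and `b e^ζ` have positive real part, so it is
constant there. Evaluating at the balanced point `e^{2ζ} = a/b`, where both coefficients equal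
`√(ab)`, gives `I(ν, a, b) = 2 (a/b)^{ν/2} K_ν(2√(ab))` whenever `Re a, Re b > 0`.

Here `b = -iz` has positive real part while `a = (ε - i|Q|²)/4` reaches the imaginary axis as
`ε → 0`. There `ab = -(|Q|/2)² z` and `a/b = (|Q|/2)² / z` still avoid the branch cut, so the right
hand side of the formula is continuous up to `ε = 0`, although the integral need not converge
absolutely at `ε = 0`.
-/

open scoped Real Topology

section HolomorphicFunctions

theorem differentiableAt_integral_of_dominated {α E : Type*} [MeasurableSpace α] {μ : Measure α}
    [NormedAddCommGroup E] [NormedSpace ℂ E] {F : ℂ → α → E} {z₀ : ℂ} {s : Set ℂ} {bound : α → ℝ}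
    (hs : s ∈ 𝓝 z₀) (hmeas : ∀ᶠ z in 𝓝 z₀, AEStronglyMeasurable (F z) μ)
    (hdiff : ∀ᵐ x ∂μ, DifferentiableOn ℂ (F · x) s)
    (hle : ∀ᵐ x ∂μ, ∀ z ∈ s, ‖F z x‖ ≤ bound x) (hbound : Integrable bound μ) :
    DifferentiableAt ℂ (fun z ↦ ∫ x, F z x ∂μ) z₀ := by
  obtain ⟨r, hr, hrs⟩ : ∃ r > 0, Metric.ball z₀ (r + r) ⊆ s := by
    obtain ⟨R, hR, hRs⟩ := Metric.mem_nhds_iff.1 hs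
    exact ⟨R / 2, half_pos hR, by rwa [add_halves]⟩
  have closedBall_subset {z : ℂ} (hz : z ∈ Metric.ball z₀ r) : Metric.closedBall z r ⊆ s :=
    (Metric.closedBall_subset_ball' (by grind [Metric.mem_ball])).trans hrs
  have hderiv : ∀ᵐ x ∂μ, ∀ z ∈ Metric.ball z₀ r, HasDerivAt (F · x) (deriv (F · x) z) z := by
    filter_upwards [hdiff] with x hx z hz
    exact (hx.differentiableAt
      (mem_of_superset (Metric.closedBall_mem_nhds z hr) (closedBall_subset hz))).hasDerivAt
  have cauchy_estimate : ∀ᵐ x ∂μ, ∀ z ∈ Metric.ball z₀ r, ‖deriv (F · x) z‖ ≤ bound x / r := by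
    filter_upwards [hdiff, hle] with x hx hxle z hz
    refine Complex.norm_deriv_le_of_forall_mem_sphere_norm_le hr
      (hx.mono ?_).diffContOnCl fun w hw ↦
        hxle w (closedBall_subset hz (Metric.sphere_subset_closedBall hw))
    exact Metric.closure_ball_subset_closedBall.trans (closedBall_subset hz)
  have hderiv_meas : AEStronglyMeasurable (fun x ↦ deriv (F · x) z₀) μ := by
    obtain ⟨w, hw, hwmeas⟩ := exists_seq_forall_of_frequently
      (hmeas.filter_mono nhdsWithin_le_nhds : ∀ᶠ z in 𝓝[≠] z₀, _).frequently
    refine aestronglyMeasurable_of_tendsto_ae atTop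
      (fun k ↦ ((hwmeas k).sub hmeas.self_of_nhds).const_smul (w k - z₀)⁻¹) ?_
    filter_upwards [hderiv] with x hx
    exact (hx z₀ (Metric.mem_ball_self hr)).tendsto_slope.comp hw
  have hint : Integrable (F z₀) μ := hbound.mono' hmeas.self_of_nhds
    (hle.mono fun x hx ↦ hx z₀ (mem_of_mem_nhds hs))
  exact (hasDerivAt_integral_of_dominated_loc_of_deriv_le (Metric.ball_mem_nhds z₀ hr) hmeas hint
    hderiv_meas cauchy_estimate (hbound.div_const r) hderiv).2.differentiableAt

theorem eq_of_differentiableOn_of_add_ofReal_eq {E : Type*} [NormedAddCommGroup E]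
    [NormedSpace ℂ E] {G : ℂ → E} {U : Set ℂ} (hU : IsOpen U) (hUc : IsPreconnected U)
    (hG : DifferentiableOn ℂ G U) (hinv : ∀ (z : ℂ) (r : ℝ), G (z + r) = G z) {z w : ℂ}
    (hz : z ∈ U) (hw : w ∈ U) : G z = G w := by
  refine hU.is_const_of_deriv_eq_zero hUc hG (fun ζ hζ ↦ ?_) hz hw
  have along_real_line : HasDerivAt (fun r : ℝ ↦ G (ζ + r)) (deriv G ζ) 0 := by
    have hGζ : HasDerivAt G (deriv G ζ) (ζ + (0 : ℝ)) := by
      simpa using (hG.differentiableAt (hU.mem_nhds hζ)).hasDerivAt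
    simpa [Function.comp_def] using
      hGζ.scomp (0 : ℝ) (Complex.ofRealCLM.hasDerivAt.const_add ζ)
  simp only [hinv] at along_real_line
  exact along_real_line.unique (hasDerivAt_const 0 (G ζ))

end HolomorphicFunctions

section RealPartsAndPowers

theorem re_exp_pos_of_abs_im_lt {z : ℂ} (hz : |z.im| < π / 2) : 0 < (Complex.exp z).re := by
  rw [Complex.exp_re]
  exact mul_pos (Real.exp_pos _) (Real.cos_pos_of_mem_Ioo (abs_lt.1 hz))

theorem abs_arg_lt_pi_div_two_of_re_pos {z : ℂ} (hz : 0 < z.re) : |z.arg| < π / 2 :=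
  Complex.abs_arg_lt_pi_div_two_iff.2 (.inl hz)

theorem re_two_mul_cpow_one_half_pos {z : ℂ} (hz : z ∈ Complex.slitPlane) :
    0 < (2 * z ^ ((1 : ℂ) / 2)).re := by
  suffices 0 < (z ^ ((1 : ℂ) / 2)).re by
    simpa only [two_mul, Complex.add_re] using add_pos this this
  rw [Complex.cpow_def_of_ne_zero (Complex.slitPlane_ne_zero hz)]
  apply re_exp_pos_of_abs_im_lt
  have arg_lt : |z.arg| < π := abs_lt.2
    ⟨Complex.neg_pi_lt_arg z, (Complex.arg_le_pi z).lt_of_ne (Complex.slitPlane_arg_ne_pi hz)⟩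
  have half_im : (Complex.log z * ((1 : ℂ) / 2)).im = z.arg / 2 := by
    rw [mul_one_div, Complex.div_ofNat_im, Complex.log_im]
  rw [half_im, abs_div, abs_two]
  gcongr

theorem ne_zero_of_re_pos {z : ℂ} (hz : 0 < z.re) : z ≠ 0 :=
  Complex.slitPlane_ne_zero (.inl hz)

theorem re_mul_exp_pos {a z : ℂ} (ha : a ≠ 0) (h : |a.arg + z.im| < π / 2) :
    0 < (a * Complex.exp z).re := by
  rw [← Complex.exp_log ha, ← Complex.exp_add]
  exact re_exp_pos_of_abs_im_lt (by rwa [Complex.add_im, Complex.log_im])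

theorem log_mul_of_re_pos {a b : ℂ} (ha : 0 < a.re) (hb : 0 < b.re) :
    Complex.log (a * b) = Complex.log a + Complex.log b := by
  have := abs_lt.1 (abs_arg_lt_pi_div_two_of_re_pos ha)
  have := abs_lt.1 (abs_arg_lt_pi_div_two_of_re_pos hb)
  exact Complex.log_mul (ne_zero_of_re_pos ha) (ne_zero_of_re_pos hb)
    ⟨by linarith, by linarith⟩

theorem log_div_of_re_pos {a b : ℂ} (ha : 0 < a.re) (hb : 0 < b.re) :
    Complex.log (a / b) = Complex.log a - Complex.log b := by
  have hb' : 0 < b⁻¹.re := by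
    rw [Complex.inv_re]
    exact div_pos hb (Complex.normSq_pos.2 (ne_zero_of_re_pos hb))
  rw [div_eq_mul_inv, log_mul_of_re_pos ha hb',
    Complex.log_inv b (Complex.slitPlane_arg_ne_pi (.inl hb)), sub_eq_add_neg]

theorem mul_mem_slitPlane_of_re_pos {a b : ℂ} (ha : 0 < a.re) (hb : 0 < b.re) :
    a * b ∈ Complex.slitPlane := by
  have := abs_lt.1 (abs_arg_lt_pi_div_two_of_re_pos ha)
  have := abs_lt.1 (abs_arg_lt_pi_div_two_of_re_pos hb)
  rw [Complex.mem_slitPlane_iff_arg, ← Complex.log_im, log_mul_of_re_pos ha hb, Complex.add_im,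
    Complex.log_im, Complex.log_im]
  exact ⟨by linarith, mul_ne_zero (ne_zero_of_re_pos ha) (ne_zero_of_re_pos hb)⟩

theorem ofReal_mul_mem_slitPlane {r : ℝ} (hr : 0 < r) {z : ℂ} (hz : z ∈ Complex.slitPlane) :
    (r : ℂ) * z ∈ Complex.slitPlane := by
  simpa [Complex.mem_slitPlane_iff, hr, hr.ne'] using hz

theorem inv_mem_slitPlane {z : ℂ} (hz : z ∈ Complex.slitPlane) : z⁻¹ ∈ Complex.slitPlane := by
  have hz0 : z ≠ 0 := Complex.slitPlane_ne_zero hz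
  simpa [Complex.mem_slitPlane_iff, div_pos_iff_of_pos_right, Complex.normSq_pos.2 hz0, hz0]
    using hz

theorem ofReal_mul_cpow {r : ℝ} (hr : 0 < r) {z : ℂ} (hz : z ≠ 0) (c : ℂ) :
    ((r : ℂ) * z) ^ c = (r : ℂ) ^ c * z ^ c := by
  have hr0 : (r : ℂ) ≠ 0 := Complex.ofReal_ne_zero.2 hr.ne'
  rw [Complex.cpow_def_of_ne_zero (mul_ne_zero hr0 hz), Complex.cpow_def_of_ne_zero hr0,
    Complex.cpow_def_of_ne_zero hz, Complex.log_ofReal_mul hr hz, Complex.ofReal_log hr.le,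
    add_mul, Complex.exp_add]

theorem ofReal_sq_mul_cpow_div_two {r : ℝ} (hr : 0 < r) {z : ℂ} (hz : z ≠ 0) (c : ℂ) :
    (((r ^ 2 : ℝ) : ℂ) * z) ^ (c / 2) = (r : ℂ) ^ c * z ^ (c / 2) := by
  have arg_eq : (r : ℂ).arg = 0 := Complex.arg_ofReal_of_nonneg hr.le
  rw [ofReal_mul_cpow (pow_pos hr 2) hz, Complex.ofReal_pow,
    ← Complex.cpow_ofNat_mul' (by simp [arg_eq, Real.pi_pos]) (by simp [arg_eq, Real.pi_pos.le]),
    mul_div_cancel₀ c two_ne_zero]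

end RealPartsAndPowers

section MacdonaldIntegral

theorem integrable_exp_mul_sub_mul_cosh (k : ℝ) {c : ℝ} (hc : 0 < c) :
    Integrable fun u : ℝ ↦ Real.exp (k * u - c * Real.cosh u) := by
  have gaussian : Integrable fun u : ℝ ↦ Real.exp (-(c / 2) * u ^ 2 + k * u) := by
    have hc' : 0 < ((c / 2 : ℝ) : ℂ).re := by rw [Complex.ofReal_re]; positivity
    refine (integrable_cexp_quadratic hc' k 0).norm.congr (ae_of_all _ fun u ↦ ?_)
    simp only [add_zero, Complex.norm_exp]
    norm_cast
  refine gaussian.mono' (Continuous.aestronglyMeasurable (by fun_prop)) (ae_of_all _ fun u ↦ ?_)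
  have sq_le_cosh : u ^ 2 / 2 ≤ Real.cosh u := by
    have cosh_eq : Real.cosh u = 1 + 2 * Real.sinh (u / 2) ^ 2 := by
      rw [← mul_div_cancel₀ u (two_ne_zero' ℝ), mul_div_assoc, Real.cosh_two_mul, Real.cosh_sq]
      ring_nf
    have abs_le_sinh : |u / 2| ≤ |Real.sinh (u / 2)| := by
      rw [Real.abs_sinh]
      exact Real.self_le_sinh_iff.2 (abs_nonneg _)
    have := sq_le_sq.2 abs_le_sinh
    linarith
  rw [Real.norm_eq_abs, Real.abs_exp, Real.exp_le_exp]
  nlinarith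

/-- The integral `∫ e^{νu - a e^{-u} - b e^u} du` over the real line, which is
`∫₀^∞ t^{ν-1} e^{-a/t - bt} dt` in the variable `u = log t`. -/
noncomputable def macdonaldIntegral (ν a b : ℂ) : ℂ :=
  ∫ u : ℝ, Complex.exp (ν * u - a * Complex.exp (-u) - b * Complex.exp u)

theorem norm_macdonaldIntegrand_le (ν : ℂ) {a b : ℂ} {c : ℝ} (ha : c ≤ a.re) (hb : c ≤ b.re)
    (u : ℝ) : ‖Complex.exp (ν * u - a * Complex.exp (-u) - b * Complex.exp u)‖ ≤
      Real.exp (ν.re * u - 2 * c * Real.cosh u) := by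
  rw [Complex.norm_exp, Real.exp_le_exp, Real.cosh_eq, ← Complex.ofReal_neg,
    ← Complex.ofReal_exp, ← Complex.ofReal_exp]
  simp only [Complex.sub_re, Complex.re_mul_ofReal]
  have := mul_le_mul_of_nonneg_right ha (Real.exp_pos (-u)).le
  have := mul_le_mul_of_nonneg_right hb (Real.exp_pos u).le
  linarith

theorem integrable_macdonaldIntegrand (ν : ℂ) {a b : ℂ} (ha : 0 < a.re) (hb : 0 < b.re) :
    Integrable fun u : ℝ ↦
      Complex.exp (ν * u - a * Complex.exp (-u) - b * Complex.exp u) := by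
  have hc : 0 < min a.re b.re := lt_min ha hb
  exact (integrable_exp_mul_sub_mul_cosh ν.re (mul_pos two_pos hc)).mono'
    (Continuous.aestronglyMeasurable (by fun_prop))
    (ae_of_all _ (norm_macdonaldIntegrand_le ν (min_le_left _ _) (min_le_right _ _)))

theorem differentiableAt_macdonaldIntegral_comp (ν : ℂ) {A B : ℂ → ℂ} {z₀ : ℂ}
    (hA : AnalyticAt ℂ A z₀) (hB : AnalyticAt ℂ B z₀) (hA₀ : 0 < (A z₀).re)
    (hB₀ : 0 < (B z₀).re) :
    DifferentiableAt ℂ (fun z ↦ macdonaldIntegral ν (A z) (B z)) z₀ := by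
  obtain ⟨c, hc, hcmin⟩ := exists_between (lt_min hA₀ hB₀)
  have hcA : ∀ᶠ z in 𝓝 z₀, c < (A z).re :=
    (Complex.continuous_re.continuousAt.comp hA.continuousAt).eventually
      (lt_mem_nhds (hcmin.trans_le (min_le_left _ _)))
  have hcB : ∀ᶠ z in 𝓝 z₀, c < (B z).re :=
    (Complex.continuous_re.continuousAt.comp hB.continuousAt).eventually
      (lt_mem_nhds (hcmin.trans_le (min_le_right _ _)))
  refine differentiableAt_integral_of_dominated
    (hcA.and (hcB.and (hA.eventually_analyticAt.and hB.eventually_analyticAt)))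
    (.of_forall fun z ↦ Continuous.aestronglyMeasurable (by fun_prop))
    (ae_of_all _ fun u z hz ↦ ?_) (ae_of_all _ fun u z hz ↦ ?_)
    (integrable_exp_mul_sub_mul_cosh ν.re (mul_pos two_pos hc))
  · obtain ⟨-, -, hAz, hBz⟩ := hz
    have := hAz.differentiableAt
    have := hBz.differentiableAt
    exact DifferentiableAt.differentiableWithinAt (by fun_prop)
  · exact norm_macdonaldIntegrand_le ν hz.1.le hz.2.1.le u

theorem macdonaldIntegral_mul_exp_ofReal (ν a b : ℂ) (r : ℝ) :
    Complex.exp (ν * r) * macdonaldIntegral ν (a * Complex.exp (-r)) (b * Complex.exp r) =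
      macdonaldIntegral ν a b := by
  symm
  rw [macdonaldIntegral, macdonaldIntegral, ← integral_const_mul, ← integral_add_right_eq_self _ r]
  congr 1 with u
  rw [← Complex.exp_add, Complex.ofReal_add, neg_add, Complex.exp_add, Complex.exp_add]
  ring_nf

theorem macdonaldIntegral_mul_exp (ν : ℂ) {a b ζ : ℂ} (ha : 0 < a.re) (hb : 0 < b.re)
    (hζa : |a.arg - ζ.im| < π / 2) (hζb : |b.arg + ζ.im| < π / 2) :
    Complex.exp (ν * ζ) * macdonaldIntegral ν (a * Complex.exp (-ζ)) (b * Complex.exp ζ) =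
      macdonaldIntegral ν a b := by
  set U : Set ℂ := Complex.im ⁻¹' (Metric.ball a.arg (π / 2) ∩ Metric.ball (-b.arg) (π / 2))
  set G : ℂ → ℂ := fun z ↦
    Complex.exp (ν * z) * macdonaldIntegral ν (a * Complex.exp (-z)) (b * Complex.exp z)
  have hU : IsOpen U := (Metric.isOpen_ball.inter Metric.isOpen_ball).preimage Complex.continuous_im
  have hUc : IsPreconnected U := (((convex_ball _ _).inter (convex_ball _ _)).linear_preimage
    Complex.imLm).isPreconnected
  have mem_U {z : ℂ} : z ∈ U ↔ |a.arg - z.im| < π / 2 ∧ |b.arg + z.im| < π / 2 := by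
    simp only [U, Set.mem_preimage, Set.mem_inter_iff, Metric.mem_ball, Real.dist_eq,
      sub_neg_eq_add, abs_sub_comm z.im, add_comm z.im]
  have hG : DifferentiableOn ℂ G U := fun z hz ↦ by
    obtain ⟨hza, hzb⟩ := mem_U.1 hz
    have hA : 0 < (a * Complex.exp (-z)).re :=
      re_mul_exp_pos (ne_zero_of_re_pos ha) (by rwa [Complex.neg_im, ← sub_eq_add_neg])
    have hB : 0 < (b * Complex.exp z).re := re_mul_exp_pos (ne_zero_of_re_pos hb) hzb
    exact (DifferentiableAt.mul (by fun_prop) (differentiableAt_macdonaldIntegral_comp ν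
      (A := fun z ↦ a * Complex.exp (-z)) (B := fun z ↦ b * Complex.exp z) (by fun_prop)
      (by fun_prop) hA hB)).differentiableWithinAt
  have hG_add (z : ℂ) (r : ℝ) : G (z + r) = G z := by
    simp only [G]
    rw [← macdonaldIntegral_mul_exp_ofReal ν (a * Complex.exp (-z)) (b * Complex.exp z) r,
      mul_add, neg_add, Complex.exp_add, Complex.exp_add, Complex.exp_add]
    simp only [mul_assoc]
  have zero_mem : (0 : ℂ) ∈ U := mem_U.2 (by simp [ha, hb])
  simpa [G] using
    eq_of_differentiableOn_of_add_ofReal_eq hU hUc hG hG_add (mem_U.2 ⟨hζa, hζb⟩) zero_mem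

theorem integral_eq_integral_Ioi_add_comp_neg {E : Type*} [NormedAddCommGroup E]
    [NormedSpace ℝ E] {f : ℝ → E} (hf : Integrable f) :
    ∫ u, f u = ∫ u in Set.Ioi (0 : ℝ), (f u + f (-u)) := by
  rw [integral_add hf.integrableOn hf.comp_neg.integrableOn, integral_comp_neg_Ioi, neg_zero,
    add_comm, intervalIntegral.integral_Iic_add_Ioi hf.integrableOn hf.integrableOn]

theorem macdonaldIntegral_half_half (ν : ℂ) {w : ℂ} (hw : 0 < w.re) :
    macdonaldIntegral ν (w / 2) (w / 2) = 2 * besselK ν w := by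
  have hw2 : 0 < (w / 2).re := by rw [Complex.div_ofNat_re]; exact half_pos hw
  rw [macdonaldIntegral, integral_eq_integral_Ioi_add_comp_neg
    (integrable_macdonaldIntegrand ν hw2 hw2), besselK, ← integral_const_mul]
  congr 1 with u
  have factor (x : ℂ) : Complex.exp (x - w / 2 * Complex.exp (-u) - w / 2 * Complex.exp u) =
      Complex.exp (-w * Real.cosh u) * Complex.exp x := by
    rw [← Complex.exp_add, Complex.ofReal_cosh, Complex.cosh]
    ring_nf
  rw [Complex.ofReal_neg, neg_neg, sub_right_comm (ν * -(u : ℂ)), factor, factor, Complex.cosh,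
    mul_neg]
  ring

theorem macdonaldIntegral_eq_besselK (ν : ℂ) {a b : ℂ} (ha : 0 < a.re) (hb : 0 < b.re) :
    macdonaldIntegral ν a b =
      2 * (a / b) ^ (ν / 2) * besselK ν (2 * (a * b) ^ ((1 : ℂ) / 2)) := by
  have ha0 : a ≠ 0 := ne_zero_of_re_pos ha
  have hb0 : b ≠ 0 := ne_zero_of_re_pos hb
  obtain ⟨ha₁, ha₂⟩ := abs_lt.1 (abs_arg_lt_pi_div_two_of_re_pos ha)
  obtain ⟨hb₁, hb₂⟩ := abs_lt.1 (abs_arg_lt_pi_div_two_of_re_pos hb)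
  set ζ : ℂ := (Complex.log a - Complex.log b) / 2 with hζ
  have hζ_im : ζ.im = (a.arg - b.arg) / 2 := by
    rw [hζ, Complex.div_ofNat_im, Complex.sub_im, Complex.log_im, Complex.log_im]
  have sqrt_eq : (a * b) ^ ((1 : ℂ) / 2) = Complex.exp ((Complex.log a + Complex.log b) / 2) := by
    rw [Complex.cpow_def_of_ne_zero (mul_ne_zero ha0 hb0), log_mul_of_re_pos ha hb, mul_one_div]
  have balance_a : a * Complex.exp (-ζ) = (a * b) ^ ((1 : ℂ) / 2) := by
    nth_rw 1 [sqrt_eq, ← Complex.exp_log ha0]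
    rw [← Complex.exp_add, hζ]
    ring_nf
  have balance_b : b * Complex.exp ζ = (a * b) ^ ((1 : ℂ) / 2) := by
    nth_rw 1 [sqrt_eq, ← Complex.exp_log hb0]
    rw [← Complex.exp_add, hζ]
    ring_nf
  have exp_mul_ζ : Complex.exp (ν * ζ) = (a / b) ^ (ν / 2) := by
    rw [Complex.cpow_def_of_ne_zero (div_ne_zero ha0 hb0), log_div_of_re_pos ha hb, hζ]
    ring_nf
  have half_half := macdonaldIntegral_half_half ν
    (re_two_mul_cpow_one_half_pos (mul_mem_slitPlane_of_re_pos ha hb))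
  rw [mul_div_cancel_left₀ _ two_ne_zero] at half_half
  rw [← macdonaldIntegral_mul_exp ν (ζ := ζ) ha hb
    (by rw [hζ_im, abs_lt]; constructor <;> linarith)
    (by rw [hζ_im, abs_lt]; constructor <;> linarith), balance_a, balance_b, half_half, exp_mul_ζ]
  ring

theorem mellin_eq_integral_exp_smul {E : Type*} [NormedAddCommGroup E] [NormedSpace ℂ E]
    (f : ℝ → E) (s : ℂ) :
    mellin f s = ∫ u : ℝ, Complex.exp (s * u) • f (Real.exp u) := by
  have change_of_variables := integral_image_eq_integral_abs_deriv_smul MeasurableSet.univ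
    (fun u _ ↦ (Real.hasDerivAt_exp u).hasDerivWithinAt) Real.exp_injective.injOn
    fun t : ℝ ↦ (t : ℂ) ^ (s - 1) • f t
  rw [Set.image_univ, Real.range_exp, setIntegral_univ] at change_of_variables
  rw [mellin, change_of_variables]
  congr 1 with u
  have exp_cpow : (Real.exp u : ℂ) ^ (s - 1) = Complex.exp (u * (s - 1)) := by
    rw [Complex.cpow_def_of_ne_zero (Complex.ofReal_ne_zero.2 (Real.exp_ne_zero u)),
      ← Complex.ofReal_log (Real.exp_nonneg u), Real.log_exp]
  rw [Real.abs_exp, ← Complex.coe_smul, smul_smul, exp_cpow, Complex.ofReal_exp,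
    ← Complex.exp_add]
  ring_nf

theorem mellin_exp_neg_div_sub_mul (ν : ℂ) {a b : ℂ} (ha : 0 < a.re) (hb : 0 < b.re) :
    mellin (fun t ↦ Complex.exp (-a / t - b * t)) ν =
      2 * (a / b) ^ (ν / 2) * besselK ν (2 * (a * b) ^ ((1 : ℂ) / 2)) := by
  rw [mellin_eq_integral_exp_smul, ← macdonaldIntegral_eq_besselK ν ha hb, macdonaldIntegral]
  congr 1 with u
  rw [smul_eq_mul, ← Complex.exp_add, Complex.ofReal_exp, Complex.exp_neg]
  ring_nf

end MacdonaldIntegral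

theorem besselK_neg (ν w : ℂ) : besselK (-ν) w = besselK ν w := by
  simp only [besselK, neg_mul, Complex.cosh_neg]

theorem differentiableAt_besselK (ν : ℂ) {w : ℂ} (hw : 0 < w.re) :
    DifferentiableAt ℂ (besselK ν) w := by
  have hw2 : 0 < (w / 2).re := by rw [Complex.div_ofNat_re]; exact half_pos hw
  have := (differentiableAt_macdonaldIntegral_comp ν (A := (· / 2)) (B := (· / 2)) (by fun_prop)
    (by fun_prop) hw2 hw2).div_const 2
  refine this.congr_of_eventuallyEq ?_
  filter_upwards [Complex.continuous_re.continuousAt.eventually (lt_mem_nhds hw)] with z hz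
  rw [macdonaldIntegral_half_half ν hz, mul_div_cancel_left₀ _ two_ne_zero]

theorem tendsto_mellin_exp_neg_div_sub_mul {ι : Type*} {l : Filter ι} {A : ι → ℂ} (ν : ℂ)
    {a b : ℂ} (hA : Tendsto A l (𝓝 a)) (hA_re : ∀ᶠ i in l, 0 < (A i).re) (hb : 0 < b.re)
    (hab : a * b ∈ Complex.slitPlane) (hdiv : a / b ∈ Complex.slitPlane) :
    Tendsto (fun i ↦ mellin (fun t ↦ Complex.exp (-A i / t - b * t)) ν) l
      (𝓝 (2 * (a / b) ^ (ν / 2) * besselK ν (2 * (a * b) ^ ((1 : ℂ) / 2)))) := by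
  have hpow : Tendsto (fun i ↦ (A i / b) ^ (ν / 2)) l (𝓝 ((a / b) ^ (ν / 2))) :=
    (hA.div_const b).cpow tendsto_const_nhds hdiv
  have hsqrt : Tendsto (fun i ↦ 2 * (A i * b) ^ ((1 : ℂ) / 2)) l
      (𝓝 (2 * (a * b) ^ ((1 : ℂ) / 2))) :=
    ((hA.mul_const b).cpow tendsto_const_nhds hab).const_mul 2
  have hbessel := (differentiableAt_besselK ν (re_two_mul_cpow_one_half_pos hab)).continuousAt
  refine ((hpow.const_mul 2).mul (hbessel.tendsto.comp hsqrt)).congr' ?_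
  filter_upwards [hA_re] with i hi
  exact (mellin_exp_neg_div_sub_mul ν hi hb).symm

theorem tendsto_mellin_exp_I_mul_sq_sub (ν : ℂ) {q : ℝ} (hq : 0 < q) {z : ℂ} (hz : 0 < z.im) :
    Tendsto (fun ε : ℝ ↦
        mellin (fun t ↦ Complex.exp ((Complex.I * (q : ℂ) ^ 2 - ε) / 4 / t + Complex.I * z * t)) ν)
      (𝓝[>] 0)
      (𝓝 (2 * (((q / 2) ^ 2 : ℝ) * z⁻¹) ^ (ν / 2) * besselK ν (q * (-z) ^ ((1 : ℂ) / 2)))) := by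
  have hz_slit : z ∈ Complex.slitPlane := .inr hz.ne'
  have hneg_slit : -z ∈ Complex.slitPlane := .inr (neg_ne_zero.2 hz.ne')
  have hr : 0 < q / 2 := half_pos hq
  set A : ℝ → ℂ := fun ε ↦ -((Complex.I * (q : ℂ) ^ 2 - ε) / 4) with hA
  set b : ℂ := -(Complex.I * z) with hb
  have hA_tendsto : Tendsto A (𝓝[>] 0) (𝓝 (A 0)) :=
    (by fun_prop : Continuous A).continuousAt.mono_left nhdsWithin_le_nhds
  have hA_re (ε : ℝ) : (A ε).re = ε / 4 := by simp [hA, ← Complex.ofReal_pow, neg_div']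
  have hA_re_pos : ∀ᶠ ε in 𝓝[>] 0, 0 < (A ε).re := by
    filter_upwards [self_mem_nhdsWithin] with ε hε
    exact (hA_re ε).symm ▸ div_pos hε four_pos
  have hb_re : 0 < b.re := by simpa [hb] using hz
  have hmul : A 0 * b = ((q / 2) ^ 2 : ℝ) * -z := by
    simp only [hA, hb]
    push_cast
    linear_combination (q ^ 2 * z / 4) * Complex.I_sq
  have hdiv : A 0 / b = ((q / 2) ^ 2 : ℝ) * z⁻¹ := by
    simp only [hA, hb]
    push_cast
    have := Complex.I_ne_zero
    have := Complex.slitPlane_ne_zero hz_slit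
    field_simp
    ring
  have sqrt_eq : 2 * (((q / 2) ^ 2 : ℝ) * -z) ^ ((1 : ℂ) / 2) = q * (-z) ^ ((1 : ℂ) / 2) := by
    rw [ofReal_sq_mul_cpow_div_two hr (Complex.slitPlane_ne_zero hneg_slit), Complex.cpow_one]
    push_cast
    ring
  have boundary_limit := tendsto_mellin_exp_neg_div_sub_mul ν hA_tendsto hA_re_pos hb_re
    (hmul ▸ ofReal_mul_mem_slitPlane (pow_pos hr 2) hneg_slit)
    (hdiv ▸ ofReal_mul_mem_slitPlane (pow_pos hr 2) (inv_mem_slitPlane hz_slit))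
  rw [hmul, hdiv, sqrt_eq] at boundary_limit
  simpa only [hA, hb, neg_neg, neg_mul, sub_neg_eq_add] using boundary_limit

theorem integral_exp_mul_exp_div_eq_mellin (s α z : ℂ) :
    ∫ t in Set.Ioi (0 : ℝ), Complex.exp (Complex.I * t * z) * Complex.exp (α / (4 * t)) /
        (4 * π * Complex.I * t) ^ 3 * (t : ℂ) ^ (-s) =
      Complex.I / (64 * π ^ 3) *
        mellin (fun t ↦ Complex.exp (α / 4 / t + Complex.I * z * t)) (-(s + 2)) := by
  rw [mellin, ← integral_const_mul]
  refine setIntegral_congr_fun measurableSet_Ioi fun t (ht : 0 < t) ↦ ?_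
  have ht0 : (t : ℂ) ≠ 0 := Complex.ofReal_ne_zero.2 ht.ne'
  have hpi : (π : ℂ) ≠ 0 := Complex.ofReal_ne_zero.2 Real.pi_ne_zero
  have power : (t : ℂ) ^ (-(s + 2) - 1) = (t : ℂ) ^ (-s) / t ^ 3 := by
    rw [← Complex.cpow_ofNat, ← Complex.cpow_sub _ _ ht0]
    ring_nf
  have exponent : α / 4 / t + Complex.I * z * t = Complex.I * t * z + α / (4 * t) := by
    rw [div_div]
    ring
  have cube_eq : (4 * π * Complex.I * t) ^ 3 = -(64 * π ^ 3 * t ^ 3) * Complex.I := by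
    linear_combination (64 * π ^ 3 * t ^ 3 * Complex.I) * Complex.I_sq
  rw [smul_eq_mul, power, exponent, Complex.exp_add, cube_eq]
  field_simp
  rw [Complex.I_sq, neg_one_mul]

theorem besselK_prefactor_eq (s : ℂ) {q : ℝ} (hq : 0 < q) {z : ℂ} (hz : z ∈ Complex.slitPlane) :
    Complex.I / (64 * π ^ 3) * (2 * (((q / 2) ^ 2 : ℝ) * z⁻¹) ^ (-(s + 2) / 2)) =
      Complex.I * z ^ (1 + s / 2) / (2 ^ (3 - s) * (π : ℂ) ^ 3 * (q : ℂ) ^ (s + 2)) := by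
  have power : (((q / 2) ^ 2 : ℝ) * z⁻¹) ^ (-(s + 2) / 2) =
      2 ^ (s + 2) / (q : ℂ) ^ (s + 2) * z ^ (1 + s / 2) := by
    rw [ofReal_sq_mul_cpow_div_two (half_pos hq) (inv_ne_zero (Complex.slitPlane_ne_zero hz)),
      Complex.inv_cpow _ _ (Complex.slitPlane_arg_ne_pi hz), neg_div, Complex.cpow_neg,
      Complex.cpow_neg, inv_inv, Complex.ofReal_div,
      Complex.div_cpow_ofReal_nonneg hq.le two_pos.le, Complex.ofReal_ofNat, inv_div, add_div,
      div_self two_ne_zero, add_comm (s / 2)]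
  have two_power : (2 : ℂ) ^ (3 - s) = 32 / 2 ^ (s + 2) := by
    rw [show 3 - s = 5 - (s + 2) by ring, Complex.cpow_sub _ _ two_ne_zero]
    norm_num
  rw [power, two_power]
  have : (2 : ℂ) ^ (s + 2) ≠ 0 := by simp
  generalize (2 : ℂ) ^ (s + 2) = p at *
  field_simp
  ring

theorem improper_integral_eq_besselK_general (s : ℂ) {q : ℝ} (hq : 0 < q) {z : ℂ}
    (hz : 0 < z.im) :
    Tendsto (fun ε : ℝ ↦
        ∫ t in Set.Ioi (0 : ℝ),
          Complex.exp (Complex.I * t * z) *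
            Complex.exp ((Complex.I * (q : ℂ) ^ 2 - (ε : ℂ)) / (4 * t)) /
              (4 * π * Complex.I * t) ^ 3 * (t : ℂ) ^ (-s))
      (𝓝[>] 0)
      (𝓝 (Complex.I * z ^ (1 + s / 2) / (2 ^ (3 - s) * (π : ℂ) ^ 3 * (q : ℂ) ^ (s + 2)) *
        besselK (s + 2) (q * (-z) ^ ((1 : ℂ) / 2)))) := by
  have boundary_limit := (tendsto_mellin_exp_I_mul_sq_sub (-(s + 2)) hq hz).const_mul
    (Complex.I / (64 * π ^ 3))
  rw [besselK_neg, ← mul_assoc, besselK_prefactor_eq s hq (.inr hz.ne')] at boundary_limit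
  simpa only [integral_exp_mul_exp_div_eq_mellin] using boundary_limit

/-- For `n ∈ ℤ`, `Q ∈ ℝ⁶` with `|Q| > 0` and `Im z > 0`:
`lim_{ε→0⁺} ∫₀^∞ e^{itz} exp((i|Q|² - ε)/(4t)) / (4πit)³ · t^{-n} dt
  = (i z^{1+n/2} / (2^{3-n} π³ |Q|^{n+2})) K_{n+2}(|Q|√(-z))`,
with the principal branch of the complex power. -/
theorem improper_integral_eq_besselK (n : ℤ) (Q : EuclideanSpace ℝ (Fin 6))
    (hQ : 0 < ‖Q‖) (z : ℂ) (hz : 0 < z.im) :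
    Tendsto (fun ε : ℝ =>
        ∫ t in Set.Ioi (0 : ℝ),
          Complex.exp (Complex.I * t * z) *
            Complex.exp ((Complex.I * (‖Q‖ : ℂ) ^ 2 - (ε : ℂ)) / (4 * t)) /
              (4 * Real.pi * Complex.I * t) ^ 3 * (t : ℂ) ^ (-n))
      (nhdsWithin 0 (Set.Ioi 0))
      (nhds (Complex.I * z ^ ((1 : ℂ) + (n : ℂ) / 2) /
        ((2 : ℂ) ^ ((3 : ℤ) - n) * (Real.pi : ℂ) ^ 3 * (‖Q‖ : ℂ) ^ (n + 2)) *
          besselK ((n : ℂ) + 2) ((‖Q‖ : ℂ) * (-z) ^ ((1 : ℂ) / 2)))) := by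
  exact_mod_cast improper_integral_eq_besselK_general n hQ hz
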